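/- arXiv:2207.00083 — 2 statements merged into one kernel-verified Lean document; each statement's English description precedes it below -/
import Mathlib

section
/- Let p be a prime, let B be an N × m matrix over ZMod p with linearly independent columns, and let R be a random vector uniformly distributed on (ZMod p)^N. Then for any two fixed vectors v₁, v₂ ∈ (ZMod p)^m, the random vector v₁ + R ᵥ* B has the same distribution as v₂ + R ᵥ* B; in particular both are uniform on (ZMod p)^m. Hence the encoded data observed by the colluding parties is distributed identically for all raw inputs. -/
open MeasureTheory ProbabilityTheory Matrix

instance (p : ℕ) : MeasurableSpace (ZMod p) := ⊤
instance (p : ℕ) : MeasurableSingletonClass (ZMod p) := ⟨fun _ => trivial⟩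

/-!
If the law of `R ᵥ* B` is translation invariant, then adding a fixed vector does not change it, and
on a finite group an invariant probability measure is uniform. The uniform law of `R` is translation
invariant, and surjective homomorphisms preserve this property, so everything reduces to the
surjectivity of `x ↦ x ᵥ* B`. If its range were proper, a nonzero linear functional would vanish on
it; that functional is `x ↦ u ⬝ᵥ x` for some `u ≠ 0`, and then `B *ᵥ u = 0` contradicts the
independence of the columns. Over an Artinian ring such functionals exist because every simple
module embeds in the ring.
-/

section Artinian

variable {A : Type*} [CommRing A] [IsArtinianRing A]

theorem exists_injective_linearMap_of_isSimpleModule (S : Type*) [AddCommGroup S] [Module A S]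
    [IsSimpleModule A S] : ∃ f : S →ₗ[A] A, Function.Injective f := by
  obtain ⟨I, hI, ⟨e⟩⟩ := isSimpleModule_iff_quot_maximal.mp ‹IsSimpleModule A S›
  have : I.IsPrime := hI.isPrime
  have h_assoc : IsAssociatedPrime I A :=
    Module.associatedPrimes.minimalPrimes_annihilator_subset_associatedPrimes A A
      (IsArtinianRing.mem_minimalPrimes (by simp [Module.annihilator_eq_bot.mpr inferInstance]))
  obtain ⟨-, f, hf⟩ := (isAssociatedPrime_iff_exists_injective_linearMap I A).mp h_assoc
  exact ⟨f ∘ₗ e.toLinearMap, hf.comp e.injective⟩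

theorem exists_ne_zero_le_ker_of_ne_top {M : Type*} [AddCommGroup M] [Module A M]
    [Module.Finite A M] {N : Submodule A M} (hN : N ≠ ⊤) :
    ∃ φ : M →ₗ[A] A, φ ≠ 0 ∧ N ≤ LinearMap.ker φ := by
  obtain ⟨P, hP, hNP⟩ := (eq_top_or_exists_le_coatom N).resolve_left hN
  have : IsSimpleModule A (M ⧸ P) := isSimpleModule_iff_isCoatom.mpr hP
  obtain ⟨f, hf⟩ := exists_injective_linearMap_of_isSimpleModule (A := A) (M ⧸ P)
  have hker : LinearMap.ker (f ∘ₗ P.mkQ) = P := by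
    rw [LinearMap.ker_comp_of_ker_eq_bot _ (LinearMap.ker_eq_bot.mpr hf), P.ker_mkQ]
  refine ⟨f ∘ₗ P.mkQ, fun h_zero => hP.1 ?_, hNP.trans hker.ge⟩
  rw [← hker, h_zero, LinearMap.ker_zero]

theorem vecMul_surjective_of_linearIndependent_col {m n : Type*} [Fintype m] [Finite n]
    {B : Matrix m n A} (hB : LinearIndependent A B.col) : Function.Surjective B.vecMul := by
  classical
  cases nonempty_fintype n
  suffices LinearMap.range B.vecMulLinear = ⊤ from LinearMap.range_eq_top.mp this
  by_contra h_range
  obtain ⟨φ, hφ, h_le⟩ := exists_ne_zero_le_ker_of_ne_top h_range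
  obtain ⟨u, rfl⟩ := (dotProductEquiv A n).surjective φ
  have hBu : B *ᵥ u = 0 := dotProduct_eq_zero _ fun x => by
    have hx : u ⬝ᵥ (x ᵥ* B) = 0 := h_le (LinearMap.mem_range_self B.vecMulLinear x)
    rwa [dotProduct_comm, dotProduct_mulVec, dotProduct_comm]
  have hu : u = 0 := mulVec_injective_iff.mpr hB (by rw [hBu, mulVec_zero])
  exact hφ (by rw [hu, map_zero])

end Artinian

theorem isAddLeftInvariant_iff_measure_singleton_eq {G : Type*} [AddGroup G] [Countable G]
    [MeasurableSpace G] [MeasurableSingletonClass G] {ν : Measure G} :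
    ν.IsAddLeftInvariant ↔ ∀ x y, ν {x} = ν {y} := by
  have h_preimage (g x : G) : (g + ·) ⁻¹' {x} = {-g + x} := by
    ext y
    simp [eq_neg_add_iff_add_eq]
  constructor
  · intro _ x y
    rw [← measure_preimage_add ν (y + -x) {y}, h_preimage]
    simp
  · refine fun h => ⟨fun g => Measure.ext_of_singleton fun x => ?_⟩
    rw [Measure.map_apply (measurable_const_add g) (measurableSet_singleton x), h_preimage]
    exact h _ _

theorem measure_singleton_eq_inv_card {α : Type*} [Fintype α] [MeasurableSpace α]
    [MeasurableSingletonClass α] {ν : Measure α} [IsProbabilityMeasure ν]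
    (h : ∀ x y, ν {x} = ν {y}) (x : α) : ν {x} = (Fintype.card α : ENNReal)⁻¹ := by
  refine ENNReal.eq_inv_of_mul_eq_one_left ?_
  calc ν {x} * Fintype.card α = ∑ y, ν {y} := by simp [h _ x, mul_comm]
    _ = 1 := by simp

theorem map_const_add_comp_eq_map {G H : Type*} [AddGroup G] [MeasurableSpace G] [MeasurableAdd G]
    [AddGroup H] [MeasurableSpace H] [MeasurableAdd H] (ν : Measure G) [ν.IsAddLeftInvariant]
    (f : G →+ H) (hf : Measurable f) (h_surj : Function.Surjective f) (v : H) :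
    ν.map (fun x => v + f x) = ν.map f := by
  have : (ν.map f).IsAddLeftInvariant := isAddLeftInvariant_map f.toAddHom hf h_surj
  calc ν.map (fun x => v + f x) = (ν.map f).map (v + ·) :=
        (Measure.map_map (measurable_const_add v) hf).symm
    _ = ν.map f := map_add_left_eq_self _ v

theorem add_vecMul_distribution_eq_general
    {A : Type*} [CommRing A] [Fintype A] [MeasurableSpace A] [MeasurableSingletonClass A]
    {Ω : Type*} [MeasurableSpace Ω] (μ : Measure Ω) [IsProbabilityMeasure μ]
    {m n : Type*} [Fintype m] [Fintype n] (B : Matrix m n A) (hB : LinearIndependent A B.col)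
    (R : Ω → m → A) (hR : Measurable R) (hunif : ∀ x y, μ (R ⁻¹' {x}) = μ (R ⁻¹' {y}))
    (v₁ v₂ : n → A) :
    μ.map (fun ω => v₁ + R ω ᵥ* B) = μ.map (fun ω => v₂ + R ω ᵥ* B) ∧
    ∀ w : n → A,
      μ ((fun ω => v₁ + R ω ᵥ* B) ⁻¹' {w}) = 1 / (Fintype.card A : ENNReal) ^ Fintype.card n := by
  classical
  let f : (m → A) →+ (n → A) := B.vecMulLinear.toAddMonoidHom
  have hf : Measurable f := .of_discrete
  have h_surj : Function.Surjective f := vecMul_surjective_of_linearIndependent_col hB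
  have h_invR : (μ.map R).IsAddLeftInvariant := isAddLeftInvariant_iff_measure_singleton_eq.mpr
    fun x y => by simpa [Measure.map_apply hR] using hunif x y
  have h_meas (v : n → A) : Measurable fun ω => v + R ω ᵥ* B := (hf.comp hR).const_add v
  have h_law (v : n → A) : μ.map (fun ω => v + R ω ᵥ* B) = (μ.map R).map f := by
    rw [← map_const_add_comp_eq_map _ f hf h_surj v, Measure.map_map (hf.const_add v) hR]
    rfl
  refine ⟨(h_law v₁).trans (h_law v₂).symm, fun w => ?_⟩
  have h_inv : ((μ.map R).map f).IsAddLeftInvariant := isAddLeftInvariant_map f.toAddHom hf h_surj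
  have : IsProbabilityMeasure (μ.map R) := Measure.isProbabilityMeasure_map hR.aemeasurable
  have : IsProbabilityMeasure ((μ.map R).map f) := Measure.isProbabilityMeasure_map hf.aemeasurable
  rw [← Measure.map_apply (h_meas v₁) (measurableSet_singleton w), h_law,
    measure_singleton_eq_inv_card (isAddLeftInvariant_iff_measure_singleton_eq.mp h_inv)]
  simp

/-- Let `B` be an `N × m` matrix over `ZMod p` with linearly independent
columns and let `R` be uniform on `(ZMod p)^N`. Then for any fixed
`v₁ v₂ : (ZMod p)^m`, the random vectors `v₁ + R ᵥ* B` and `v₂ + R ᵥ* B` have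
the same distribution; in particular both are uniform on `(ZMod p)^m`. Hence
the encoded data observed by the colluding parties is distributed identically
for all raw inputs. -/
theorem add_vecMul_distribution_eq
    {p : ℕ} [Fact p.Prime] {Ω : Type*} [MeasurableSpace Ω]
    (μ : Measure Ω) [IsProbabilityMeasure μ]
    {N m : ℕ} (B : Matrix (Fin N) (Fin m) (ZMod p))
    (hB : LinearIndependent (ZMod p) Bᵀ)
    (R : Ω → (Fin N → ZMod p)) (hR : Measurable R)
    (hunif : ∀ v : Fin N → ZMod p, μ (R ⁻¹' {v}) = 1 / (p : ENNReal) ^ N)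
    (v₁ v₂ : Fin m → ZMod p) :
    μ.map (fun ω => v₁ + R ω ᵥ* B) = μ.map (fun ω => v₂ + R ω ᵥ* B) ∧
    ∀ w : Fin m → ZMod p,
      μ ((fun ω => v₁ + R ω ᵥ* B) ⁻¹' {w}) = 1 / (p : ENNReal) ^ m := by
  simpa using add_vecMul_distribution_eq_general μ B hB R hR
    (fun x y => (hunif x).trans (hunif y).symm) v₁ v₂
end

section
/- Let p be a prime, let B be an N × m matrix over ZMod p with linearly independent columns, let X be a random vector in (ZMod p)^k, let L : (ZMod p)^k → (ZMod p)^m be any fixed linear map, and let R be a random vector uniformly distributed on (ZMod p)^N and independent of X. Then the random vector Y = L(X) + R ᵥ* B is independent of X, and Y is uniformly distributed on (ZMod p)^m. -/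
open MeasureTheory ProbabilityTheory Matrix

/-!
On a finite group, the uniform distribution is the unique translation-invariant probability measure.
A surjective homomorphism carries invariant measures to invariant measures, so `R ᵥ* B` is uniform
as soon as the columns of `B` are linearly independent. Given `X = x`, the encoding `f x + R ᵥ* B`
is a translate of this uniform vector, so its conditional law does not depend on `x`.
-/

section UniformDistribution

variable {G : Type*} [MeasurableSpace G]

theorem isAddLeftInvariant_uniformOn_univ [AddGroup G] [MeasurableAdd G] :
    (uniformOn (Set.univ : Set G)).IsAddLeftInvariant := by
  rw [uniformOn, ProbabilityTheory.cond, Measure.restrict_univ]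
  infer_instance

variable [Finite G] [MeasurableSingletonClass G]

theorem eq_uniformOn_univ_of_measure_singleton_eq {ν : Measure G} [IsProbabilityMeasure ν]
    (hν : ∀ g h, ν {g} = ν {h}) : ν = uniformOn Set.univ := by
  have := Fintype.ofFinite G
  refine Measure.ext_of_singleton fun g => ?_
  have hsum : Fintype.card G * ν {g} = 1 := by
    calc Fintype.card G * ν {g}
      _ = ∑ h : G, ν {h} := by simp [hν _ g]
      _ = 1 := by simp
  rw [uniformOn_univ, Measure.count_singleton, one_div]
  exact ENNReal.eq_inv_of_mul_eq_one_left (by rwa [mul_comm])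

theorem eq_uniformOn_univ_of_isAddLeftInvariant [AddGroup G] (ν : Measure G)
    [IsProbabilityMeasure ν] [ν.IsAddLeftInvariant] : ν = uniformOn Set.univ := by
  refine eq_uniformOn_univ_of_measure_singleton_eq fun g h => ?_
  have hpre : (fun x => g - h + x) ⁻¹' {g} = {h} := by
    ext x
    simp [sub_eq_add_neg, add_assoc, neg_add_eq_zero, eq_comm]
  rw [← hpre, measure_preimage_add]

theorem measurePreserving_uniformOn_univ_of_surjective {H : Type*} [AddGroup G] [AddGroup H]
    [Finite H] [MeasurableSpace H] [MeasurableSingletonClass H] (f : G →+ H)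
    (hf : Function.Surjective f) :
    MeasurePreserving f (uniformOn Set.univ) (uniformOn Set.univ) := by
  have hmeas : Measurable f := measurable_of_finite f
  have := isAddLeftInvariant_uniformOn_univ (G := G)
  have := isAddLeftInvariant_map (μ := uniformOn Set.univ) f.toAddHom hmeas hf
  have := Measure.isProbabilityMeasure_map (μ := uniformOn Set.univ) hmeas.aemeasurable
  exact ⟨hmeas, eq_uniformOn_univ_of_isAddLeftInvariant _⟩

theorem hasLaw_uniformOn_univ_iff {Ω : Type*} [MeasurableSpace Ω] {μ : Measure Ω} {S : Ω → G}
    (hS : AEMeasurable S μ) :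
    HasLaw S (uniformOn Set.univ) μ ↔ ∀ g, μ (S ⁻¹' {g}) = 1 / (Nat.card G : ENNReal) := by
  have := Fintype.ofFinite G
  have hlaw : HasLaw S (uniformOn Set.univ) μ ↔ μ.map S = uniformOn Set.univ :=
    ⟨HasLaw.map_eq, HasLaw.mk hS⟩
  simp only [hlaw, Measure.ext_iff_singleton, uniformOn_univ, Measure.count_singleton,
    Measure.map_apply_of_aemeasurable hS (measurableSet_singleton _), Nat.card_eq_fintype_card]

end UniformDistribution

section OneTimePad

variable {Ω E G : Type*} [MeasurableSpace Ω] [MeasurableSpace E] [AddGroup G] [MeasurableSpace G]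
  [MeasurableAdd₂ G] {μ : Measure Ω} {ν : Measure G}
  [IsProbabilityMeasure ν] [ν.IsAddLeftInvariant] {S : Ω → G} {X : Ω → E} {f : E → G}

theorem hasLaw_prodMk_add_of_isAddLeftInvariant (hS : HasLaw S ν μ) (hX : AEMeasurable X μ)
    (hindep : IndepFun S X μ) (hf : Measurable f) :
    HasLaw (fun ω => (X ω, f (X ω) + S ω)) ((μ.map X).prod ν) μ := by
  have := hS.isProbabilityMeasure_iff.2 ‹_›
  have hpair : HasLaw (fun ω => (X ω, S ω)) ((μ.map X).prod ν) μ :=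
    ⟨hX.prodMk hS.aemeasurable,
      by rw [hindep.symm.map_prod_eq_prod_map_map hX hS.aemeasurable, hS.map_eq]⟩
  have hshear : MeasurePreserving (fun q : E × G => (q.1, f q.1 + q.2))
      ((μ.map X).prod ν) ((μ.map X).prod ν) :=
    (MeasurePreserving.id (μ.map X)).skew_product (g := fun x s => f x + s)
      ((hf.comp measurable_fst).add measurable_snd)
      (ae_of_all _ fun x => map_add_left_eq_self ν (f x))
  exact hshear.comp_hasLaw hpair

theorem hasLaw_add_of_isAddLeftInvariant (hS : HasLaw S ν μ) (hX : AEMeasurable X μ)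
    (hindep : IndepFun S X μ) (hf : Measurable f) :
    HasLaw (fun ω => f (X ω) + S ω) ν μ := by
  have := hS.isProbabilityMeasure_iff.2 ‹_›
  have := Measure.isProbabilityMeasure_map hX
  exact measurePreserving_snd.comp_hasLaw
    (hasLaw_prodMk_add_of_isAddLeftInvariant hS hX hindep hf)

theorem indepFun_add_of_isAddLeftInvariant (hS : HasLaw S ν μ) (hX : AEMeasurable X μ)
    (hindep : IndepFun S X μ) (hf : Measurable f) :
    IndepFun (fun ω => f (X ω) + S ω) X μ := by
  have := hS.isProbabilityMeasure_iff.2 ‹_›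
  have hY := hasLaw_add_of_isAddLeftInvariant hS hX hindep hf
  refine ((indepFun_iff_map_prod_eq_prod_map_map hX hY.aemeasurable).2 ?_).symm
  rw [(hasLaw_prodMk_add_of_isAddLeftInvariant hS hX hindep hf).map_eq, hY.map_eq]

end OneTimePad

theorem vecMulLinear_surjective_of_linearIndependent_col {K m n : Type*} [Field K] [Fintype m]
    [Finite n] {B : Matrix m n K} (hB : LinearIndependent K B.col) :
    Function.Surjective B.vecMulLinear := by
  have := Fintype.ofFinite n
  have hrank : Module.finrank K B.vecMulLinear.range = Module.finrank K (n → K) := by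
    calc Module.finrank K B.vecMulLinear.range
      _ = B.rank := by rw [range_vecMulLinear, rank_eq_finrank_span_row]
      _ = Fintype.card n := by rw [← rank_transpose]; exact hB.rank_matrix
      _ = Module.finrank K (n → K) := (Module.finrank_fintype_fun_eq_card K).symm
  exact LinearMap.range_eq_top.1 (Submodule.eq_top_of_finrank_eq hrank)

theorem encoded_data_indep_and_uniform_general
    {Ω E K m n : Type*} [MeasurableSpace Ω] [MeasurableSpace E] [Field K] [Finite K]
    [MeasurableSpace K] [MeasurableSingletonClass K] [Fintype m] [Finite n]
    (μ : Measure Ω) (B : Matrix m n K) (hB : LinearIndependent K B.col)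
    (X : Ω → E) (hX : AEMeasurable X μ) (f : E → n → K) (hf : Measurable f)
    (R : Ω → m → K) (hindep : IndepFun R X μ) (hunif : HasLaw R (uniformOn Set.univ) μ) :
    IndepFun (fun ω => f (X ω) + R ω ᵥ* B) X μ ∧
    HasLaw (fun ω => f (X ω) + R ω ᵥ* B) (uniformOn Set.univ) μ := by
  have hB_unif : MeasurePreserving B.vecMulLinear (uniformOn Set.univ) (uniformOn Set.univ) :=
    measurePreserving_uniformOn_univ_of_surjective B.vecMulLinear.toAddMonoidHom
      (vecMulLinear_surjective_of_linearIndependent_col hB)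
  have hS : HasLaw (fun ω => R ω ᵥ* B) (uniformOn Set.univ) μ := hB_unif.comp_hasLaw hunif
  have hSX : IndepFun (fun ω => R ω ᵥ* B) X μ := hindep.comp hB_unif.measurable measurable_id
  have := isAddLeftInvariant_uniformOn_univ (G := n → K)
  exact ⟨indepFun_add_of_isAddLeftInvariant hS hX hSX hf,
    hasLaw_add_of_isAddLeftInvariant hS hX hSX hf⟩

/-- **DarKnight privacy for colluding GPUs.** Let `B` be an `N × m` matrix over
`ZMod p` with linearly independent columns, let `X` be a random vector in
`(ZMod p)^k`, let `L : (ZMod p)^k → (ZMod p)^m` be any fixed linear map, and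
let `R` be uniform on `(ZMod p)^N` and independent of `X`. Then
`Y = L(X) + R ᵥ* B` is independent of `X`, and `Y` is uniform on `(ZMod p)^m`:
the encoded data leaks no information about the raw data `X`. -/
theorem encoded_data_indep_and_uniform
    {p : ℕ} [Fact p.Prime] {Ω : Type*} [MeasurableSpace Ω]
    (μ : Measure Ω) [IsProbabilityMeasure μ]
    {N m k : ℕ} (B : Matrix (Fin N) (Fin m) (ZMod p))
    (hB : LinearIndependent (ZMod p) Bᵀ)
    (X : Ω → (Fin k → ZMod p)) (hX : Measurable X)
    (L : (Fin k → ZMod p) →ₗ[ZMod p] (Fin m → ZMod p))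
    (R : Ω → (Fin N → ZMod p)) (hR : Measurable R)
    (hindep : IndepFun R X μ)
    (hunif : ∀ v : Fin N → ZMod p, μ (R ⁻¹' {v}) = 1 / (p : ENNReal) ^ N) :
    IndepFun (fun ω => L (X ω) + R ω ᵥ* B) X μ ∧
    ∀ w : Fin m → ZMod p,
      μ ((fun ω => L (X ω) + R ω ᵥ* B) ⁻¹' {w}) = 1 / (p : ENNReal) ^ m := by
  have hR_unif : HasLaw R (uniformOn Set.univ) μ :=
    (hasLaw_uniformOn_univ_iff hR.aemeasurable).2 (by simpa using hunif)
  obtain ⟨hYX, hY⟩ := encoded_data_indep_and_uniform_general μ B hB X hX.aemeasurable L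
    (measurable_of_finite L) R hindep hR_unif
  exact ⟨hYX, by simpa using (hasLaw_uniformOn_univ_iff hY.aemeasurable).1 hY⟩
end
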